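/- Assume the standing assumptions (B) and, for each ε ∈ (0,1), let u^ε ∈ C(Q̄) ∩ C^{2,1}(Q) be a classical solution of (QL) with the boundary condition (BC). Then for any δ > 0 there exist λ₀ > 0 and ε₀ ∈ (0,1) such that |u^ε(0,t) − g(0)| ≤ δ for all t ∈ [0, exp(λ₀/ε)] and all ε ∈ (0,ε₀). -/

import Mathlib

open Set Filter Metric Topology
open scoped ENNReal

noncomputable section

/-- `n`-dimensional Euclidean space. -/
abbrev Eu (n : ℕ) := EuclideanSpace ℝ (Fin n)

variable {n : ℕ}

/-- Euclidean dot product. -/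
def dotp (x y : Eu n) : ℝ := ∑ i, x i * y i

/-- The quadratic form `A p · p` of a matrix `A`. -/
def mquad (A : Matrix (Fin n) (Fin n) ℝ) (p : Eu n) : ℝ := ∑ i, ∑ j, A i j * p i * p j

/-- `A ∈ 𝕊ⁿ(θ)`: symmetric with `θ I ≤ A ≤ θ⁻¹ I`. -/
def memS (θ : ℝ) (A : Matrix (Fin n) (Fin n) ℝ) : Prop :=
  A.IsSymm ∧ ∀ p : Eu n, θ * ‖p‖ ^ 2 ≤ mquad A p ∧ mquad A p ≤ θ⁻¹ * ‖p‖ ^ 2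

/-- order of symmetric matrices (via quadratic forms). -/
def mle (A B : Matrix (Fin n) (Fin n) ℝ) : Prop := ∀ p : Eu n, mquad A p ≤ mquad B p

/-- trace of the product `A·H`. -/
def trMul (A H : Matrix (Fin n) (Fin n) ℝ) : ℝ := ∑ i, ∑ j, A i j * H j i

/-- the Pucci maximal operator associated with `𝕊ⁿ(θ)`. -/
def pucci (θ : ℝ) (X : Matrix (Fin n) (Fin n) ℝ) : ℝ :=
  sSup ((fun A => trMul A X) '' {A | memS θ A})

/-- time derivative of `u(x,t)`. -/
def tD (u : Eu n → ℝ → ℝ) (x : Eu n) (t : ℝ) : ℝ := deriv (u x) t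

/-- spatial gradient of `u(x,t)`. -/
def sG (u : Eu n → ℝ → ℝ) (x : Eu n) (t : ℝ) : Eu n := gradient (fun y => u y t) x

/-- spatial Hessian matrix of `u(x,t)`. -/
def sH (u : Eu n → ℝ → ℝ) (x : Eu n) (t : ℝ) : Matrix (Fin n) (Fin n) ℝ :=
  fun i j => fderiv ℝ (fun y => sG u y t i) x (EuclideanSpace.single j 1)

/-- Hessian matrix of a static function. -/
def hessS (v : Eu n → ℝ) (x : Eu n) : Matrix (Fin n) (Fin n) ℝ :=
  fun i j => fderiv ℝ (fun y => gradient v y i) x (EuclideanSpace.single j 1)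

/-- closed parabolic cylinder `Q̄_T = closure Ω × [0,T]` (with `T ∈ (0,∞]`). -/
def cylC (Ω : Set (Eu n)) (T : ℝ≥0∞) : Set (Eu n × ℝ) :=
  {p | p.1 ∈ closure Ω ∧ 0 ≤ p.2 ∧ ENNReal.ofReal p.2 ≤ T}

/-- open parabolic cylinder `Q_T = Ω × (0,T)`. -/
def cylO (Ω : Set (Eu n)) (T : ℝ≥0∞) : Set (Eu n × ℝ) :=
  {p | p.1 ∈ Ω ∧ 0 < p.2 ∧ ENNReal.ofReal p.2 < T}

/-- `u ∈ C^{2,1}(Q_T)`. -/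
def C21 (u : Eu n → ℝ → ℝ) (Ω : Set (Eu n)) (T : ℝ≥0∞) : Prop :=
  (∀ x ∈ Ω, ∀ t : ℝ, 0 < t → ENNReal.ofReal t < T →
     ContDiffAt ℝ 2 (fun y => u y t) x ∧ DifferentiableAt ℝ (u x) t) ∧
  ContinuousOn (fun p : Eu n × ℝ => tD u p.1 p.2) (cylO Ω T) ∧
  ContinuousOn (fun p : Eu n × ℝ => sH u p.1 p.2) (cylO Ω T)

/-- `u ∈ C(Q̄_T) ∩ C^{2,1}(Q_T)`. -/
def Classical21 (u : Eu n → ℝ → ℝ) (Ω : Set (Eu n)) (T : ℝ≥0∞) : Prop :=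
  ContinuousOn (fun p : Eu n × ℝ => u p.1 p.2) (cylC Ω T) ∧ C21 u Ω T

/-- a coefficient field in `C(Q̄_T; 𝕊ⁿ(θ))`. -/
def MatC (θ : ℝ) (A : Eu n → ℝ → Matrix (Fin n) (Fin n) ℝ) (Ω : Set (Eu n))
    (T : ℝ≥0∞) : Prop :=
  ContinuousOn (fun p : Eu n × ℝ => A p.1 p.2) (cylC Ω T) ∧
  ∀ p ∈ cylC Ω T, memS θ (A p.1 p.2)

/-- `u` is a classical solution of `u_t = ε tr[A D²u] + b·Du` in `Q_T`. -/
def SolveL (ε : ℝ) (A : Eu n → ℝ → Matrix (Fin n) (Fin n) ℝ) (b : Eu n → Eu n)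
    (u : Eu n → ℝ → ℝ) (Ω : Set (Eu n)) (T : ℝ≥0∞) : Prop :=
  ∀ x ∈ Ω, ∀ t : ℝ, 0 < t → ENNReal.ofReal t < T →
    tD u x t = ε * trMul (A x t) (sH u x t) + dotp (b x) (sG u x t)

/-- `u` is a classical subsolution of `(L)` in `Q_T`. -/
def SubsolL (ε : ℝ) (A : Eu n → ℝ → Matrix (Fin n) (Fin n) ℝ) (b : Eu n → Eu n)
    (u : Eu n → ℝ → ℝ) (Ω : Set (Eu n)) (T : ℝ≥0∞) : Prop :=
  ∀ x ∈ Ω, ∀ t : ℝ, 0 < t → ENNReal.ofReal t < T →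
    tD u x t ≤ ε * trMul (A x t) (sH u x t) + dotp (b x) (sG u x t)

/-- `u` is a classical supersolution of `(L)` in `Q_T`. -/
def SupersolL (ε : ℝ) (A : Eu n → ℝ → Matrix (Fin n) (Fin n) ℝ) (b : Eu n → Eu n)
    (u : Eu n → ℝ → ℝ) (Ω : Set (Eu n)) (T : ℝ≥0∞) : Prop :=
  ∀ x ∈ Ω, ∀ t : ℝ, 0 < t → ENNReal.ofReal t < T →
    ε * trMul (A x t) (sH u x t) + dotp (b x) (sG u x t) ≤ tD u x t

/-- viscosity subsolution of `H(x,Du) = 0` on `A`. -/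
def ViscSub (H : Eu n → Eu n → ℝ) (A : Set (Eu n)) (u : Eu n → ℝ) : Prop :=
  ∀ φ : Eu n → ℝ, ContDiff ℝ 1 φ → ∀ x ∈ A,
    IsLocalMaxOn (fun y => u y - φ y) A x → H x (gradient φ x) ≤ 0

/-- viscosity supersolution of `H(x,Du) = 0` on `A`. -/
def ViscSup (H : Eu n → Eu n → ℝ) (A : Set (Eu n)) (u : Eu n → ℝ) : Prop :=
  ∀ φ : Eu n → ℝ, ContDiff ℝ 1 φ → ∀ x ∈ A,
    IsLocalMinOn (fun y => u y - φ y) A x → 0 ≤ H x (gradient φ x)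

/-- the Hamiltonian `H_α(x,p) = α(x) p·p + b(x)·p`. -/
def Ham (α : Eu n → Matrix (Fin n) (Fin n) ℝ) (b : Eu n → Eu n) (x p : Eu n) : ℝ :=
  mquad (α x) p + dotp (b x) p

/-- the quasi-potential `V_α`: the pointwise supremum (= maximal element) of all
Lipschitz viscosity subsolutions of `H_α(x,Du)=0` in `Ω` vanishing at the origin. -/
def Vq (α : Eu n → Matrix (Fin n) (Fin n) ℝ) (b : Eu n → Eu n) (Ω : Set (Eu n))
    (x : Eu n) : ℝ :=
  sSup {r | ∃ u : Eu n → ℝ, (∃ K : NNReal, LipschitzOnWith K u (closure Ω)) ∧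
    u 0 = 0 ∧ ViscSub (Ham α b) Ω u ∧ r = u x}

/-- `M_α = min_{∂Ω} V_α`. -/
def Mq (α : Eu n → Matrix (Fin n) (Fin n) ℝ) (b : Eu n → Eu n) (Ω : Set (Eu n)) : ℝ :=
  sInf (Vq α b Ω '' frontier Ω)

/-- `argmin (V_α | ∂Ω)`. -/
def argminV (α : Eu n → Matrix (Fin n) (Fin n) ℝ) (b : Eu n → Eu n)
    (Ω : Set (Eu n)) : Set (Eu n) :=
  {x ∈ frontier Ω | ∀ y ∈ frontier Ω, Vq α b Ω x ≤ Vq α b Ω y}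

/-- `Σ_α^m = {x ∈ Ω̄ : V_α(x) ≤ m}`. -/
def SigmaM (α : Eu n → Matrix (Fin n) (Fin n) ℝ) (b : Eu n → Eu n) (Ω : Set (Eu n))
    (m : ℝ) : Set (Eu n) :=
  {x ∈ closure Ω | Vq α b Ω x ≤ m}

/-- `Ω` is a bounded `C¹` domain with outward unit normal `ν`. -/
def IsBdC1With (Ω : Set (Eu n)) (ν : Eu n → Eu n) : Prop :=
  IsOpen Ω ∧ Bornology.IsBounded Ω ∧
  ∃ ρ : Eu n → ℝ, ContDiff ℝ 1 ρ ∧ Ω = {x | ρ x < 0} ∧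
    ∀ x ∈ frontier Ω, gradient ρ x ≠ 0 ∧ ν x = ‖gradient ρ x‖⁻¹ • gradient ρ x

/-- `X` is the flow of `b`, and the origin is globally asymptotically stable. -/
def GAS (b : Eu n → Eu n) (X : ℝ → Eu n → Eu n) : Prop :=
  (∀ x, X 0 x = x) ∧ (∀ x t, HasDerivAt (fun s => X s x) (b (X t x)) t) ∧
  (∀ x, Tendsto (fun t => X t x) atTop (nhds 0)) ∧
  (∀ ε > (0:ℝ), ∃ δ > (0:ℝ), ∀ x : Eu n, ‖x‖ < δ → ∀ t ≥ (0:ℝ), ‖X t x‖ < ε)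

/-- `Ω_δ = {x ∈ Ω : dist(x,∂Ω) > δ}`. -/
def Omd (Ω : Set (Eu n)) (δ : ℝ) : Set (Eu n) := {x ∈ Ω | δ < infDist x (frontier Ω)}

/-- `Ω^Π_δ = {x ∈ Ω̄ : dist(x, ∂Ω \ Π) > δ}`. -/
def OmPid (Ω Pset : Set (Eu n)) (δ : ℝ) : Set (Eu n) :=
  {x ∈ closure Ω | δ < infDist x (frontier Ω \ Pset)}

/-- the standing assumptions (B). -/
structure SettingB (n : ℕ) where
  Ω : Set (Eu n)
  ν : Eu n → Eu n
  g : Eu n → ℝ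
  θ₀ : ℝ
  a : Eu n → ℝ → Matrix (Fin n) (Fin n) ℝ
  b : Eu n → Eu n
  b₀ : ℝ
  r₀ : ℝ
  θ₀_mem : θ₀ ∈ Set.Ioc (0 : ℝ) 1
  domain : IsBdC1With Ω ν
  zero_mem : (0 : Eu n) ∈ Ω
  g_cont : ContinuousOn g (closure Ω)
  a_cont : ContinuousOn (fun p : Eu n × ℝ => a p.1 p.2) (closure Ω ×ˢ Set.univ)
  a_mem : ∀ x ∈ closure Ω, ∀ c : ℝ, memS θ₀ (a x c)
  b_lip : ∃ K : NNReal, LipschitzWith K b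
  b_zero : b 0 = 0
  b_gas : ∃ X : ℝ → Eu n → Eu n, GAS b X
  b_inward : ∀ x ∈ frontier Ω, dotp (b x) (ν x) < 0
  b₀_pos : 0 < b₀
  r₀_pos : 0 < r₀
  ball_sub : closedBall (0 : Eu n) r₀ ⊆ Ω
  b_coerc : ∀ x ∈ ball (0 : Eu n) r₀, dotp (b x) x ≤ -b₀ * ‖x‖ ^ 2

namespace SettingB

variable (S : SettingB n)

/-- the quasi-potential `V^c` associated with `(a(·,c), b)`. -/
def Vc (c : ℝ) : Eu n → ℝ := Vq (fun x => S.a x c) S.b S.Ω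

/-- `M(c) = min_{∂Ω} V^c`. -/
def M (c : ℝ) : ℝ := sInf (S.Vc c '' frontier S.Ω)

/-- `G(c) = {g(x) : x ∈ argmin(V^c|∂Ω)}`. -/
def Gset (c : ℝ) : Set ℝ := S.g '' argminV (fun x => S.a x c) S.b S.Ω

/-- `G⁺(c) = max G(c)`. -/
def Gp (c : ℝ) : ℝ := sSup (S.Gset c)

/-- `G⁻(c) = min G(c)`. -/
def Gm (c : ℝ) : ℝ := sInf (S.Gset c)

/-- `c₀ = g(0)`. -/
def c0 : ℝ := S.g 0

/-- `g_min = min_{Ω̄} g`. -/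
def gmin : ℝ := sInf (S.g '' closure S.Ω)

/-- `g_max = max_{Ω̄} g`. -/
def gmax : ℝ := sSup (S.g '' closure S.Ω)

/-- the crossing value `c₁`. -/
def c1 : ℝ :=
  if S.c0 ≤ S.Gp S.c0 then sInf {c | S.c0 ≤ c ∧ S.Gm c ≤ c}
  else sSup {c | c ≤ S.c0 ∧ c ≤ S.Gp c}

/-- the function `c̄ : (0,∞) → I_g`. -/
def cbar (l : ℝ) : ℝ :=
  if l < S.M S.c0 ∨ S.c1 = S.c0 then S.c0
  else if S.c0 < S.c1 then min S.c1 (sInf {c | c ∈ Set.Icc S.c0 S.c1 ∧ S.M c = l})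
  else max S.c1 (sSup {c | c ∈ Set.Icc S.c1 S.c0 ∧ S.M c = l})

/-- assumption (FK13): `G⁺(c₀) = G⁻(c₀)`. -/
def FK13 : Prop := S.Gp S.c0 = S.Gm S.c0

/-- assumption (FK12). -/
def FK12 : Prop :=
  ∀ δ₀ > (0:ℝ), ∃ δ ∈ Set.Ioc (0:ℝ) δ₀,
    (S.c1 ≤ S.c0 ∧ S.gmin < S.c1 → S.c1 - δ < S.Gm (S.c1 - δ)) ∧
    (S.c0 ≤ S.c1 ∧ S.c1 < S.gmax → S.Gp (S.c1 + δ) < S.c1 + δ)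

/-- `u` is a classical (`C(Q̄) ∩ C^{2,1}(Q)`) solution of the quasi-linear equation (QL). -/
def SolvesQL (ε : ℝ) (u : Eu n → ℝ → ℝ) : Prop :=
  Classical21 u S.Ω ⊤ ∧ SolveL ε (fun x t => S.a x (u x t)) S.b u S.Ω ⊤

/-- the boundary condition (BC): `u = g` on the parabolic boundary of `Q`. -/
def BC (u : Eu n → ℝ → ℝ) : Prop :=
  (∀ x ∈ closure S.Ω, u x 0 = S.g x) ∧ ∀ x ∈ frontier S.Ω, ∀ t > (0:ℝ), u x t = S.g x

end SettingB


lemma trMul_nonpos (A H : Matrix (Fin n) (Fin n) ℝ) (hs : A.IsSymm)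
    (hA : ∀ p : Eu n, 0 ≤ mquad A p) (hH : ∀ p : Eu n, mquad H p ≤ 0) : trMul A H ≤ 0 := by
  have hp : A.PosSemidef := by
    apply Matrix.PosSemidef.of_dotProduct_mulVec_nonneg
    · rw [Matrix.IsHermitian, Matrix.conjTranspose_eq_transpose_of_trivial]
      exact hs
    · intro x
      have := hA (WithLp.toLp 2 x)
      refine this.trans_eq ?_
      simp only [mquad, dotProduct, Matrix.mulVec, Finset.mul_sum]
      refine Finset.sum_congr rfl fun i _ => Finset.sum_congr rfl fun j _ => ?_
      simp; ring
  obtain ⟨B, hB⟩ : ∃ B : Matrix (Fin n) (Fin n) ℝ, A = B.conjTranspose * B := by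
    open scoped MatrixOrder in
    exact CStarAlgebra.nonneg_iff_eq_star_mul_self.mp hp.nonneg
  have : trMul A H = ∑ k, mquad H (WithLp.toLp 2 (fun i => B k i)) := by
    subst hB
    simp only [trMul, mquad, Matrix.mul_apply, Matrix.conjTranspose_apply, star_trivial,
      Finset.sum_mul]
    rw [Finset.sum_comm_cycle]
    refine Finset.sum_congr rfl fun k _ => ?_
    rw [Finset.sum_comm]
    refine Finset.sum_congr rfl fun i _ => Finset.sum_congr rfl fun j _ => ?_
    ring
  rw [this]
  exact Finset.sum_nonpos fun k _ => hH _

/-- necessary second order condition in one dimension -/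
lemma second_test (f : ℝ → ℝ) (x : ℝ) (hc : ContinuousAt f x) (hm : IsLocalMax f x) :
    deriv (deriv f) x ≤ 0 := by
  by_contra h
  push Not at h
  have hmin := isLocalMin_of_deriv_deriv_pos h hm.deriv_eq_zero hc
  have he : f =ᶠ[𝓝 x] fun _ => f x := by
    filter_upwards [hm, hmin] with y h1 h2 using le_antisymm h1 h2
  have := he.deriv.deriv_eq
  simp at this
  linarith

lemma grad_coord (f : Eu n → ℝ) (y : Eu n) (i : Fin n) :
    gradient f y i = fderiv ℝ f y (EuclideanSpace.single i 1) := by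
  have := EuclideanSpace.inner_single_right (𝕜 := ℝ) i 1 (gradient f y)
  simp at this
  rw [← this]

lemma dotp_inner (x y : Eu n) : dotp x y = inner ℝ x y := by
  simp [dotp, PiLp.inner_apply, mul_comm]

lemma vec_sum (p : Eu n) : p = ∑ i, p i • EuclideanSpace.single i (1:ℝ) := by
  ext j
  simp [Pi.single_apply]

lemma deriv1 (f : Eu n → ℝ) (x p : Eu n) (hf : ContDiffAt ℝ 2 f x) :
    ∀ᶠ s in 𝓝 (0:ℝ), HasDerivAt (fun s : ℝ => f (x + s • p)) (fderiv ℝ f (x + s • p) p) s := by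
  have h1 : ∀ᶠ y in 𝓝 x, DifferentiableAt ℝ f y := by
    have := hf.eventually (by simp)
    filter_upwards [this] with y hy using hy.differentiableAt (by simp)
  have ht : Tendsto (fun s : ℝ => x + s • p) (𝓝 0) (𝓝 x) := by
    have : Continuous (fun s : ℝ => x + s • p) := by fun_prop
    simpa using this.tendsto 0
  filter_upwards [ht.eventually h1] with s hs
  have hl : HasDerivAt (fun s : ℝ => x + s • p) p s := by
    simpa using ((hasDerivAt_id s).smul_const p).const_add x
  exact hs.hasFDerivAt.comp_hasDerivAt s hl

lemma deriv1_zero (f : Eu n → ℝ) (x p : Eu n) (hf : ContDiffAt ℝ 2 f x) :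
    HasDerivAt (fun s : ℝ => f (x + s • p)) (dotp p (gradient f x)) 0 := by
  have h := (deriv1 f x p hf).self_of_nhds
  convert h using 1
  rw [dotp_inner, real_inner_comm]
  simp [gradient]

lemma deriv2_zero (f : Eu n → ℝ) (x p : Eu n) (hf : ContDiffAt ℝ 2 f x) :
    HasDerivAt (deriv (fun s : ℝ => f (x + s • p))) (mquad (hessS f x) p) 0 := by
  have h := deriv1 f x p hf
  have hd : DifferentiableAt ℝ (fderiv ℝ f) x :=
    (hf.fderiv_right (m := 1) (by norm_num)).differentiableAt (by simp)
  have hl : HasDerivAt (fun s : ℝ => x + s • p) p 0 := by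
    simpa using ((hasDerivAt_id (0:ℝ)).smul_const p).const_add x
  have h2 : HasDerivAt (fun s : ℝ => fderiv ℝ f (x + s • p)) (fderiv ℝ (fderiv ℝ f) x p) 0 := by
    have h3 : HasFDerivAt (fderiv ℝ f) (fderiv ℝ (fderiv ℝ f) x) (x + (0:ℝ) • p) := by
      simpa using hd.hasFDerivAt
    exact h3.comp_hasDerivAt 0 hl
  have h4 : HasDerivAt (fun s : ℝ => fderiv ℝ f (x + s • p) p) (fderiv ℝ (fderiv ℝ f) x p p) 0 :=
    by simpa using h2.clm_apply (hasDerivAt_const (0:ℝ) p)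
  have e : mquad (hessS f x) p = fderiv ℝ (fderiv ℝ f) x p p := by
    have hh : ∀ i j, hessS f x i j = fderiv ℝ (fderiv ℝ f) x (EuclideanSpace.single j 1)
        (EuclideanSpace.single i 1) := by
      intro i j
      unfold hessS
      simp only [grad_coord]
      rw [fderiv_clm_apply hd (by fun_prop)]
      simp
    simp only [mquad, hh]
    conv_rhs => rw [vec_sum p]
    simp only [map_sum, map_smul, sum_apply, smul_apply,
      smul_eq_mul, Finset.mul_sum]
    refine Finset.sum_congr rfl fun i _ => Finset.sum_congr rfl fun j _ => ?_
    ring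
  rw [e]
  refine h4.congr_of_eventuallyEq ?_
  filter_upwards [h] with s hs using hs.deriv

/-- barrier along lines -/
lemma bar1 (m κ : ℝ) (x p : Eu n) (s : ℝ) :
    HasDerivAt (fun s : ℝ => m * Real.exp (κ * ‖x + s • p‖ ^ 2))
      (m * Real.exp (κ * ‖x + s • p‖ ^ 2) * (κ * (2 * inner ℝ x p + 2 * s * ‖p‖ ^ 2))) s := by
  have e : ∀ s : ℝ, ‖x + s • p‖ ^ 2 = ‖x‖ ^ 2 + 2 * (s * inner ℝ x p) + s ^ 2 * ‖p‖ ^ 2 := by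
    intro s
    rw [norm_add_sq_real, inner_smul_right, norm_smul, mul_pow]
    simp
  simp only [e]
  have h : HasDerivAt (fun s : ℝ => κ * (‖x‖ ^ 2 + 2 * (s * inner ℝ x p) + s ^ 2 * ‖p‖ ^ 2))
      (κ * (2 * inner ℝ x p + 2 * s * ‖p‖ ^ 2)) s := by
    have := ((((hasDerivAt_id s).mul_const (inner ℝ x p)).const_mul 2).const_add (‖x‖ ^ 2)).add
      (((hasDerivAt_id s).pow 2).mul_const (‖p‖ ^ 2))
    refine (this.const_mul κ).congr_deriv ?_
    simp
  refine (h.exp.const_mul m).congr_deriv ?_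
  ring

lemma bar2 (m κ : ℝ) (x p : Eu n) :
    HasDerivAt (deriv (fun s : ℝ => m * Real.exp (κ * ‖x + s • p‖ ^ 2)))
      (m * Real.exp (κ * ‖x‖ ^ 2) * (4 * κ ^ 2 * (inner ℝ x p) ^ 2 + 2 * κ * ‖p‖ ^ 2)) 0 := by
  have e : deriv (fun s : ℝ => m * Real.exp (κ * ‖x + s • p‖ ^ 2)) = fun s =>
      m * Real.exp (κ * ‖x + s • p‖ ^ 2) * (κ * (2 * inner ℝ x p + 2 * s * ‖p‖ ^ 2)) :=
    funext fun s => (bar1 m κ x p s).deriv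
  rw [e]
  have h : HasDerivAt (fun s : ℝ => κ * (2 * inner ℝ x p + 2 * s * ‖p‖ ^ 2))
      (κ * (2 * ‖p‖ ^ 2)) 0 := by
    have := ((((hasDerivAt_id (0:ℝ)).const_mul 2).mul_const (‖p‖ ^ 2)).const_add (2 * inner ℝ x p))
    simpa using this.const_mul κ
  refine ((bar1 m κ x p 0).mul h).congr_deriv ?_
  simp
  ring

lemma left_max (f : ℝ → ℝ) (t : ℝ) (ht : 0 < t) (hd : DifferentiableAt ℝ f t)
    (h : ∀ s ∈ Set.Icc 0 t, f s ≤ f t) : 0 ≤ deriv f t := by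
  have := (hasDerivAt_iff_tendsto_slope_left_right.1 hd.hasDerivAt).1
  refine ge_of_tendsto this ?_
  filter_upwards [Ioo_mem_nhdsLT ht] with s hs
  rw [slope_def_field]
  exact div_nonneg_of_nonpos (by linarith [h s ⟨hs.1.le, hs.2.le⟩]) (by linarith [hs.2])

/-- the matrix of the barrier -/
def barM (κ : ℝ) (x : Eu n) : Matrix (Fin n) (Fin n) ℝ :=
  fun i j => 4 * κ ^ 2 * (x i * x j) + (if i = j then 2 * κ else 0)

lemma mquad_barM (κ : ℝ) (x p : Eu n) :
    mquad (barM κ x) p = 4 * κ ^ 2 * (inner ℝ x p) ^ 2 + 2 * κ * ‖p‖ ^ 2 := by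
  rw [← dotp_inner, EuclideanSpace.real_norm_sq_eq, sq (dotp x p)]
  simp only [mquad, barM, dotp, add_mul, Finset.sum_add_distrib, ite_mul, zero_mul,
    Finset.sum_ite_eq, Finset.mem_univ, if_true, Finset.sum_mul, Finset.mul_sum]
  congr 1
  · refine Finset.sum_congr rfl fun i _ => Finset.sum_congr rfl fun j _ => ?_
    ring
  · refine Finset.sum_congr rfl fun i _ => ?_
    ring

lemma trMul_barM (κ : ℝ) (x : Eu n) (A : Matrix (Fin n) (Fin n) ℝ) :
    trMul A (barM κ x) = 4 * κ ^ 2 * mquad A x + 2 * κ * ∑ i, A i i := by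
  simp only [mquad, barM, trMul, mul_add, Finset.sum_add_distrib, mul_ite, mul_zero,
    Finset.sum_ite_eq', Finset.mem_univ, if_true, Finset.mul_sum]
  congr 1
  · refine Finset.sum_congr rfl fun i _ => Finset.sum_congr rfl fun j _ => ?_
    ring
  · refine Finset.sum_congr rfl fun i _ => ?_
    ring

lemma trace_le (θ : ℝ) (A : Matrix (Fin n) (Fin n) ℝ) (hA : memS θ A) :
    ∑ i, A i i ≤ n * θ⁻¹ := by
  have : ∀ i, A i i ≤ θ⁻¹ := by
    intro i
    have := (hA.2 (EuclideanSpace.single i 1)).2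
    simpa [mquad, Pi.single_apply] using this
  calc ∑ i, A i i ≤ ∑ _i : Fin n, θ⁻¹ := Finset.sum_le_sum fun i _ => this i
    _ = n * θ⁻¹ := by simp

lemma trMul_barM_le (θ κ : ℝ) (hκ : 0 ≤ κ) (x : Eu n) (A : Matrix (Fin n) (Fin n) ℝ)
    (hA : memS θ A) :
    trMul A (barM κ x) ≤ 4 * κ ^ 2 * (θ⁻¹ * ‖x‖ ^ 2) + 2 * κ * (n * θ⁻¹) := by
  rw [trMul_barM]
  have h1 := trace_le θ A hA
  have h2 := (hA.2 x).2
  gcongr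

lemma trMul_sub_smul (A H B : Matrix (Fin n) (Fin n) ℝ) (c : ℝ) :
    trMul A (fun i j => H i j - c * B i j) = trMul A H - c * trMul A B := by
  simp only [trMul, Finset.mul_sum, ← Finset.sum_sub_distrib]
  refine Finset.sum_congr rfl fun i _ => Finset.sum_congr rfl fun j _ => ?_
  ring

lemma mquad_sub_smul (H B : Matrix (Fin n) (Fin n) ℝ) (c : ℝ) (p : Eu n) :
    mquad (fun i j => H i j - c * B i j) p = mquad H p - c * mquad B p := by
  simp only [mquad, Finset.mul_sum, ← Finset.sum_sub_distrib]
  refine Finset.sum_congr rfl fun i _ => Finset.sum_congr rfl fun j _ => ?_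
  ring

/-- comparison with the barrier `c + η t + m exp (κ |x|²)`. -/
lemma comparison (Ω U : Set (Eu n)) (hU : IsOpen U) (hUb : Bornology.IsBounded U) (hUΩ : U ⊆ Ω)
    (θ ε c η m κ T : ℝ) (hθ : 0 < θ) (hε : 0 < ε) (hm : 0 ≤ m) (hκ : 0 ≤ κ)
    (A : Eu n → ℝ → Matrix (Fin n) (Fin n) ℝ)
    (hA : ∀ x ∈ Ω, ∀ t, memS θ (A x t)) (b : Eu n → Eu n) (u : Eu n → ℝ → ℝ)
    (hcl : Classical21 u Ω ⊤) (hs : SolveL ε A b u Ω ⊤)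
    (h0 : ∀ x ∈ closure U, u x 0 ≤ c + m * Real.exp (κ * ‖x‖ ^ 2))
    (hb : ∀ x ∈ closure U, x ∉ U → ∀ t, 0 < t → u x t ≤ c + η * t + m * Real.exp (κ * ‖x‖ ^ 2))
    (hη : ∀ x ∈ U, m * Real.exp (κ * ‖x‖ ^ 2) *
      (ε * (4 * κ ^ 2 * (θ⁻¹ * ‖x‖ ^ 2) + 2 * κ * (n * θ⁻¹)) + 2 * κ * dotp (b x) x) < η) :
    ∀ x ∈ closure U, ∀ t ∈ Set.Icc 0 T, u x t ≤ c + η * t + m * Real.exp (κ * ‖x‖ ^ 2) := by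
  intro x hx t ht
  set w : Eu n × ℝ → ℝ := fun p => u p.1 p.2 - (c + η * p.2 + m * Real.exp (κ * ‖p.1‖ ^ 2))
    with hw
  have hK : IsCompact (closure U ×ˢ Set.Icc (0:ℝ) T) :=
    hUb.isCompact_closure.prod isCompact_Icc
  have hwc : ContinuousOn w (closure U ×ˢ Set.Icc (0:ℝ) T) := by
    refine ContinuousOn.sub (hcl.1.mono ?_) (by fun_prop)
    rintro ⟨y, s⟩ ⟨hy, hs⟩
    exact ⟨closure_mono hUΩ hy, hs.1, le_top⟩
  obtain ⟨⟨y, s⟩, ⟨hy, hs0⟩, hmax⟩ := hK.exists_isMaxOn ⟨(x, t), hx, ht⟩ hwc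
  have hle : w (x, t) ≤ w (y, s) := hmax ⟨hx, ht⟩
  suffices h : w (y, s) ≤ 0 by
    simp only [hw] at h hle
    linarith
  simp only at hy hs0
  rcases hs0.1.eq_or_lt with h | hspos
  · subst h
    have := h0 y hy
    simp only [hw]
    linarith
  by_cases hyU : y ∉ U
  · have := hb y hy hyU s hspos
    simp only [hw]
    linarith
  exfalso
  push Not at hyU
  have hyΩ := hUΩ hyU
  obtain ⟨hC2, hdt⟩ := hcl.2.1 y hyΩ s hspos ENNReal.ofReal_lt_top
  have heq := hs y hyΩ s hspos ENNReal.ofReal_lt_top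
  have hstr := hη y hyU
  -- time derivative
  have htime : η ≤ tD u y s := by
    have h1 : HasDerivAt (fun r => u y r - (c + η * r + m * Real.exp (κ * ‖y‖ ^ 2)))
        (deriv (u y) s - η) s := by
      refine (hdt.hasDerivAt.sub ((((hasDerivAt_id s).const_mul η).const_add c).add_const
        (m * Real.exp (κ * ‖y‖ ^ 2)))).congr_deriv ?_
      simp
    have h2 := left_max _ s hspos h1.differentiableAt (by
      intro r hr
      exact hmax (a := (y, r)) ⟨hy, hr.1, hr.2.trans hs0.2⟩)
    rw [h1.deriv] at h2
    unfold tD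
    linarith
  -- space derivatives
  set E := m * Real.exp (κ * ‖y‖ ^ 2) with hE
  have hspace : ∀ p : Eu n, dotp p (sG u y s) = E * (2 * κ * inner ℝ y p) ∧
      mquad (sH u y s) p ≤ E * mquad (barM κ y) p := by
    intro p
    have d1 := deriv1_zero (fun z => u z s) y p hC2
    have d1e := deriv1 (fun z => u z s) y p hC2
    have d2 := deriv2_zero (fun z => u z s) y p hC2
    have b1 := bar1 m κ y p
    have b2 := bar2 m κ y p
    have hloc : IsLocalMax (fun r : ℝ => u (y + r • p) s - m * Real.exp (κ * ‖y + r • p‖ ^ 2)) 0 := by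
      have hcont : Tendsto (fun r : ℝ => y + r • p) (𝓝 0) (𝓝 y) := by
        have : Continuous (fun r : ℝ => y + r • p) := by fun_prop
        simpa using this.tendsto 0
      filter_upwards [hcont.eventually (hU.mem_nhds hyU)] with r hr
      have : w (y + r • p, s) ≤ w (y, s) := hmax ⟨subset_closure hr, hs0⟩
      simp only [hw] at this
      simp only [zero_smul, add_zero]
      linarith
    have hd := d1.sub (b1 0)
    constructor
    · have := hloc.hasDerivAt_eq_zero hd
      simp at this
      unfold sG
      rw [hE]
      linarith
    · have h2 := second_test _ 0 hd.continuousAt hloc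
      have he : deriv (fun r : ℝ => u (y + r • p) s - m * Real.exp (κ * ‖y + r • p‖ ^ 2)) =ᶠ[𝓝 0]
          fun r => deriv (fun r : ℝ => u (y + r • p) s) r
            - deriv (fun r : ℝ => m * Real.exp (κ * ‖y + r • p‖ ^ 2)) r := by
        filter_upwards [d1e] with r hr
        rw [hr.deriv, (b1 r).deriv]
        exact (hr.sub (b1 r)).deriv
      have h3 : deriv (deriv (fun r : ℝ => u (y + r • p) s
          - m * Real.exp (κ * ‖y + r • p‖ ^ 2))) 0 = _ := he.deriv_eq.trans (d2.sub b2).deriv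
      have h4 : mquad (sH u y s) p - _ ≤ 0 := h3.symm.trans_le h2
      rw [mquad_barM, hE]
      linarith
  have hAy := hA y hyΩ s
  have htr : trMul (A y s) (sH u y s) ≤ E * trMul (A y s) (barM κ y) := by
    have := trMul_nonpos (A y s) (fun i j => sH u y s i j - E * barM κ y i j) hAy.1
      (fun p => le_trans (by positivity) (hAy.2 p).1)
      (fun p => by rw [mquad_sub_smul]; linarith [(hspace p).2])
    rw [trMul_sub_smul] at this
    linarith
  have hE0 : 0 ≤ E := by positivity
  have htr2 := htr.trans (mul_le_mul_of_nonneg_left (trMul_barM_le θ κ hκ y _ hAy) hE0)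
  have hg := (hspace (b y)).1
  rw [real_inner_comm, ← dotp_inner] at hg
  have := mul_le_mul_of_nonneg_left htr2 hε.le
  rw [heq, hg] at htime
  nlinarith [this, htime, hstr]

lemma neg_classical (u : Eu n → ℝ → ℝ) (Ω : Set (Eu n)) (ε : ℝ)
    (A : Eu n → ℝ → Matrix (Fin n) (Fin n) ℝ) (b : Eu n → Eu n)
    (hcl : Classical21 u Ω ⊤) (hs : SolveL ε A b u Ω ⊤) :
    Classical21 (fun x t => - u x t) Ω ⊤ ∧ SolveL ε A b (fun x t => - u x t) Ω ⊤ := by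
  have e1 : ∀ x t, tD (fun x t => - u x t) x t = - tD u x t := by
    intro x t
    simp only [tD]
    exact deriv.fun_neg
  have e2 : ∀ x t, sG (fun x t => - u x t) x t = - sG u x t := by
    intro x t
    simp only [sG, gradient]
    rw [fderiv_fun_neg, map_neg]
  have e3 : ∀ x t, sH (fun x t => - u x t) x t = - sH u x t := by
    intro x t
    ext i j
    simp only [sH, e2, PiLp.neg_apply, Matrix.neg_apply]
    rw [fderiv_fun_neg]
    rfl
  refine ⟨⟨hcl.1.neg, ?_, ?_, ?_⟩, ?_⟩
  · intro x hx t ht h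
    have := hcl.2.1 x hx t ht h
    exact ⟨this.1.neg, this.2.neg⟩
  · simp only [e1]
    exact hcl.2.2.1.neg
  · simp only [e3]
    exact hcl.2.2.2.neg
  · intro x hx t ht h
    have := hs x hx t ht h
    rw [e1, e2, e3, this]
    simp only [trMul, dotp, Matrix.neg_apply, PiLp.neg_apply, mul_neg, Finset.sum_neg_distrib]
    ring

/-- global maximum principle -/
lemma max_principle (Ω : Set (Eu n)) (hU : IsOpen Ω) (hUb : Bornology.IsBounded Ω)
    (θ ε G : ℝ) (hθ : 0 < θ) (hε : 0 < ε)
    (A : Eu n → ℝ → Matrix (Fin n) (Fin n) ℝ)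
    (hA : ∀ x ∈ Ω, ∀ t, memS θ (A x t)) (b : Eu n → Eu n) (u : Eu n → ℝ → ℝ)
    (hcl : Classical21 u Ω ⊤) (hs : SolveL ε A b u Ω ⊤)
    (h0 : ∀ x ∈ closure Ω, u x 0 ≤ G)
    (hb : ∀ x ∈ frontier Ω, ∀ t > 0, u x t ≤ G) :
    ∀ x ∈ closure Ω, ∀ t, 0 ≤ t → u x t ≤ G := by
  intro x hx t ht
  refine le_of_forall_pos_le_add fun η hη => ?_
  have hq : 0 < η / (t + 1) := by positivity
  have := comparison Ω Ω hU hUb subset_rfl θ ε G (η / (t + 1)) 0 0 t hθ hε le_rfl le_rfl A hA b u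
    hcl hs (by simpa using h0)
    (by
      intro y hy hy' r hr
      have := hb y (by rw [hU.frontier_eq]; exact ⟨hy, hy'⟩) r hr
      have : 0 ≤ η / (t + 1) * r := by positivity
      linarith)
    (by intro y _; simpa using hq) x hx t ⟨ht, le_rfl⟩
  have h2 : η / (t + 1) * t ≤ η := by
    rw [div_mul_eq_mul_div, div_le_iff₀ (by positivity)]
    nlinarith
  linarith

lemma exp_aux (N z : ℝ) (hN : 0 ≤ N) (hz : 0 ≤ z) :
    Real.exp z * (N - z) < Real.exp N * (N + 1) := by
  rcases le_or_gt N z with h | h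
  · have h1 : Real.exp z * (N - z) ≤ 0 :=
      mul_nonpos_of_nonneg_of_nonpos (Real.exp_pos _).le (by linarith)
    have h2 : 0 < Real.exp N * (N + 1) := by positivity
    linarith
  · have h1 : Real.exp z * (N - z) ≤ Real.exp N * (N - z) :=
      mul_le_mul_of_nonneg_right (Real.exp_le_exp.2 h.le) (by linarith)
    have h2 : Real.exp N * (N - z) < Real.exp N * (N + 1) :=
      mul_lt_mul_of_pos_left (by linarith) (Real.exp_pos _)
    linarith

/-- one-sided estimate -/
lemma upper (S : SettingB n) (r G c ε : ℝ) (hr : 0 < r) (hr0 : r < S.r₀) (hG0 : 0 < G)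
    (hc : -G ≤ c) (hε : 0 < ε)
    (A : Eu n → ℝ → Matrix (Fin n) (Fin n) ℝ)
    (hA : ∀ x ∈ S.Ω, ∀ t, memS S.θ₀ (A x t)) (u : Eu n → ℝ → ℝ)
    (hcl : Classical21 u S.Ω ⊤) (hs : SolveL ε A S.b u S.Ω ⊤)
    (h0 : ∀ x ∈ closedBall (0 : Eu n) r, u x 0 ≤ c)
    (hG : ∀ x ∈ closure S.Ω, ∀ t, 0 ≤ t → u x t ≤ G) (t : ℝ) (ht : 0 ≤ t) :
    u 0 t ≤ c + 2 * G * Real.exp (-(S.b₀ * S.θ₀ / 4 * r ^ 2 / ε)) *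
      (1 + S.b₀ * (Real.exp (n / 2) * (n / 2 + 1)) * t) := by
  have hθ := S.θ₀_mem.1
  have hb0 := S.b₀_pos
  set κ := S.b₀ * S.θ₀ / 4 / ε with hκ
  have hκ0 : 0 < κ := by positivity
  set m := 2 * G * Real.exp (-(κ * r ^ 2)) with hm
  have hm0 : 0 < m := by positivity
  have hsub : closure (ball (0 : Eu n) r) ⊆ closedBall 0 r := closure_ball_subset_closedBall
  have hbs : closedBall (0 : Eu n) r ⊆ S.Ω :=
    (closedBall_subset_closedBall hr0.le).trans S.ball_sub
  set K := Real.exp (n / 2) * ((n:ℝ) / 2 + 1) with hK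
  have hKpos : 0 < K := by positivity
  have key := comparison S.Ω (ball 0 r) isOpen_ball isBounded_ball
    (ball_subset_closedBall.trans hbs) S.θ₀ ε c (m * S.b₀ * K) m κ t hθ hε hm0.le hκ0.le A hA
    S.b u hcl hs
    (by
      intro x hx
      have := h0 x (hsub hx)
      have : 0 ≤ m * Real.exp (κ * ‖x‖ ^ 2) := by positivity
      linarith)
    (by
      intro x hx hx' s hs
      have hx1 := hsub hx
      have hn : ‖x‖ = r := by
        simp at hx1 hx'
        linarith
      have h1 := hG x (subset_closure (hbs hx1)) s hs.le
      have h2 : m * Real.exp (κ * ‖x‖ ^ 2) = 2 * G := by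
        rw [hn, hm, mul_assoc, ← Real.exp_add]
        simp
      have h3 : 0 ≤ m * S.b₀ * K * s := by positivity
      linarith)
    (by
      intro x hx
      have hbx := S.b_coerc x (ball_subset_ball hr0.le hx)
      have hz : 0 ≤ κ * ‖x‖ ^ 2 := by positivity
      have h1 := exp_aux ((n:ℝ) / 2) (κ * ‖x‖ ^ 2) (by positivity) hz
      have h2 : ε * (4 * κ ^ 2 * (S.θ₀⁻¹ * ‖x‖ ^ 2) + 2 * κ * (n * S.θ₀⁻¹))
          + 2 * κ * (-S.b₀ * ‖x‖ ^ 2) = S.b₀ * ((n:ℝ) / 2 - κ * ‖x‖ ^ 2) := by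
        have e : ε * κ * S.θ₀⁻¹ = S.b₀ / 4 := by
          rw [hκ]; field_simp
        linear_combination (4 * κ * ‖x‖ ^ 2 + 2 * n) * e
      have h3 : 2 * κ * dotp (S.b x) x ≤ 2 * κ * (-S.b₀ * ‖x‖ ^ 2) :=
        mul_le_mul_of_nonneg_left hbx (by positivity)
      calc _ ≤ m * Real.exp (κ * ‖x‖ ^ 2) * (S.b₀ * ((n:ℝ) / 2 - κ * ‖x‖ ^ 2)) := by
            refine mul_le_mul_of_nonneg_left ?_ (by positivity)
            linarith
        _ = m * S.b₀ * (Real.exp (κ * ‖x‖ ^ 2) * ((n:ℝ) / 2 - κ * ‖x‖ ^ 2)) := by ring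
        _ < _ := mul_lt_mul_of_pos_left h1 (by positivity))
    0 (subset_closure (mem_ball_self hr)) t ⟨ht, le_rfl⟩
  have e : S.b₀ * S.θ₀ / 4 * r ^ 2 / ε = κ * r ^ 2 := by rw [hκ]; ring
  rw [e]
  simp at key
  linarith

/-- Lemma 6.1: `u^ε(0,t)` stays near `g(0)` up to some exponential time. -/
theorem stmt17 {n : ℕ} (S : SettingB n) (u : ℝ → Eu n → ℝ → ℝ)
    (hu : ∀ ε ∈ Set.Ioo (0:ℝ) 1, S.SolvesQL ε (u ε) ∧ S.BC (u ε))
    (δ : ℝ) (hδ : 0 < δ) :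
    ∃ lam0 > (0:ℝ), ∃ ε₀ ∈ Set.Ioo (0:ℝ) 1, ∀ ε ∈ Set.Ioo (0:ℝ) ε₀,
      ∀ t ∈ Set.Icc (0:ℝ) (Real.exp (lam0 / ε)), |u ε 0 t - S.g 0| ≤ δ := by
  obtain ⟨hΩo, hΩb, -⟩ := S.domain
  have hθ := S.θ₀_mem.1
  have hb0 := S.b₀_pos
  obtain ⟨G, hG0, hG⟩ : ∃ G > 0, ∀ x ∈ closure S.Ω, |S.g x| ≤ G := by
    obtain ⟨C, hC⟩ := hΩb.isCompact_closure.exists_bound_of_continuousOn S.g_cont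
    exact ⟨max C 1, by positivity, fun x hx => (hC x hx).trans (le_max_left _ _)⟩
  have h0c : (0 : Eu n) ∈ closure S.Ω := subset_closure S.zero_mem
  obtain ⟨r, hr, hr0, hgr⟩ : ∃ r > 0, r < S.r₀ ∧ ∀ x ∈ closedBall (0 : Eu n) r,
      |S.g x - S.g 0| ≤ δ / 2 := by
    have hgc : ContinuousAt S.g 0 :=
      S.g_cont.continuousAt (mem_of_superset (hΩo.mem_nhds S.zero_mem) subset_closure)
    obtain ⟨ρ, hρ, h⟩ := Metric.continuousAt_iff.1 hgc (δ / 2) (by positivity)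
    have hmin : 0 < min ρ S.r₀ := lt_min hρ S.r₀_pos
    refine ⟨min ρ S.r₀ / 2, by positivity, ?_, ?_⟩
    · linarith [min_le_right ρ S.r₀]
    · intro x hx
      have hx' : dist x 0 < ρ := by
        have := mem_closedBall.1 hx
        linarith [min_le_left ρ S.r₀]
      exact (h hx').le
  have hbs : closedBall (0 : Eu n) r ⊆ closure S.Ω :=
    ((closedBall_subset_closedBall hr0.le).trans S.ball_sub).trans subset_closure
  set lam0 := S.b₀ * S.θ₀ / 4 * r ^ 2 / 2 with hlam
  have hl : 0 < lam0 := by positivity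
  set K := S.b₀ * (Real.exp (n / 2) * ((n:ℝ) / 2 + 1)) with hK
  have hK0 : 0 < K := by positivity
  refine ⟨lam0, hl, min (1/2) (lam0 * δ / (4 * G * (1 + K))), ⟨by positivity, ?_⟩, ?_⟩
  · exact (min_le_left _ _).trans_lt (by norm_num)
  intro ε ⟨hε, hεlt⟩ t ⟨ht0, htT⟩
  have hε1 : ε < 1 := hεlt.trans ((min_le_left _ _).trans_lt (by norm_num))
  have hε2 : ε < lam0 * δ / (4 * G * (1 + K)) := hεlt.trans_le (min_le_right _ _)
  obtain ⟨⟨hcl, hs⟩, hbc0, hbc⟩ := hu ε ⟨hε, hε1⟩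
  obtain ⟨hcl', hs'⟩ := neg_classical _ _ _ _ _ hcl hs
  have hA : ∀ x ∈ S.Ω, ∀ t, memS S.θ₀ (S.a x (u ε x t)) := fun x hx t =>
    S.a_mem x (subset_closure hx) _
  have hfr : ∀ x ∈ frontier S.Ω, x ∈ closure S.Ω := fun x hx => frontier_subset_closure hx
  have M1 := max_principle S.Ω hΩo hΩb S.θ₀ ε G hθ hε _ hA S.b (u ε) hcl hs
    (fun x hx => by rw [hbc0 x hx]; exact (abs_le.1 (hG x hx)).2)
    (fun x hx t ht => by rw [hbc x hx t ht]; exact (abs_le.1 (hG x (hfr x hx))).2)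
  have M2 := max_principle S.Ω hΩo hΩb S.θ₀ ε G hθ hε _ hA S.b _ hcl' hs'
    (fun x hx => by rw [hbc0 x hx]; linarith [(abs_le.1 (hG x hx)).1])
    (fun x hx t ht => by rw [hbc x hx t ht]; linarith [(abs_le.1 (hG x (hfr x hx))).1])
  have g0 := abs_le.1 (hG 0 h0c)
  have U1 := upper S r G (S.g 0 + δ / 2) ε hr hr0 hG0 (by linarith) hε _ hA (u ε) hcl hs
    (fun x hx => by rw [hbc0 x (hbs hx)]; linarith [(abs_le.1 (hgr x hx)).2]) M1 t ht0
  have U2 := upper S r G (-S.g 0 + δ / 2) ε hr hr0 hG0 (by linarith) hε _ hA _ hcl' hs'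
    (fun x hx => by rw [hbc0 x (hbs hx)]; linarith [(abs_le.1 (hgr x hx)).1]) M2 t ht0
  have hsmall : 2 * G * Real.exp (-(S.b₀ * S.θ₀ / 4 * r ^ 2 / ε)) * (1 + K * t) ≤ δ / 2 := by
    have e : S.b₀ * S.θ₀ / 4 * r ^ 2 / ε = lam0 / ε + lam0 / ε := by rw [hlam]; ring
    have hq : 0 < lam0 / ε := by positivity
    have h1 : 1 + K * t ≤ (1 + K) * Real.exp (lam0 / ε) := by
      have : 1 ≤ Real.exp (lam0 / ε) := Real.one_le_exp hq.le
      nlinarith [mul_le_mul_of_nonneg_left htT hK0.le]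
    have h2 : Real.exp (-(lam0 / ε)) ≤ ε / lam0 := by
      rw [Real.exp_neg, ← inv_div lam0 ε]
      exact inv_anti₀ hq (by linarith [Real.add_one_le_exp (lam0 / ε)])
    have h3 : 4 * G * (1 + K) * ε ≤ lam0 * δ := by
      rw [lt_div_iff₀ (by positivity)] at hε2
      linarith
    calc _ ≤ 2 * G * Real.exp (-(S.b₀ * S.θ₀ / 4 * r ^ 2 / ε)) *
          ((1 + K) * Real.exp (lam0 / ε)) := mul_le_mul_of_nonneg_left h1 (by positivity)
      _ = 2 * G * (1 + K) * (Real.exp (-(lam0 / ε + lam0 / ε)) * Real.exp (lam0 / ε)) := by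
          rw [e]; ring
      _ = 2 * G * (1 + K) * Real.exp (-(lam0 / ε)) := by
          rw [← Real.exp_add]; congr 2; ring
      _ ≤ 2 * G * (1 + K) * (ε / lam0) := mul_le_mul_of_nonneg_left h2 (by positivity)
      _ ≤ δ / 2 := by
          rw [mul_div_assoc', div_le_iff₀ hl]
          linarith
  rw [← hK] at U1 U2
  rw [abs_le]
  constructor <;> linarith
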